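/- Let 𝓛 be a quite full lamination system. Then each point p of S¹ satisfies exactly one of the following: (1) p is an endpoint of 𝓛 (p ∈ E(𝓛)); (2) p is the pivot of a unique crown of 𝓛; (3) p is a rainbow point of 𝓛. -/

import Mathlib

/-!
Fix a point `p` of the circle and cut the circle there: a fundamental domain `[r, r + 1)` with `p`
the class of `r` gives every point a real coordinate (`crd`), in which the intervals whose closure
misses `p` are ordinary open intervals (`Away`).

Suppose `p` is not an endpoint of `L`. Then each leaf has exactly one side avoiding `p`, and
unlinkedness says that any two of these sides are nested or disjoint (`laminar`).

* If each of them lies in a maximal one, the maximal sides form a gap (`isGap_maxSides`) with `p`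
  among its vertices. No element of the gap ends at `p`, so vertices accumulate at `p` and the gap
  is not a polygon (`gapVerts_infinite`). It is therefore a crown; its tips are endpoints of `L`,
  so `p` can only be its pivot (`pivot_of_max`).
* Otherwise some side `I` lies in no maximal one. The sides containing `I` form a chain, which has a
  cofinal sequence because `ℝ` is second countable (`exists_chain`). If the union of the chain were
  a good interval it would belong to `L` and be maximal (`chain_union`), so the union is the
  complement of `p`, and the duals of the chain form a rainbow at `p` (`rainbow_of_exhaust`).

The alternatives exclude one another. Every leaf lies on an element of a crown, whose closure misses
the pivot, so the pivot is not an endpoint (`not_mem_E_of_pivot`). Small rainbow intervals around an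
endpoint `p` would cross a leaf ending at `p` (`not_rainbow_of_vertex`). A small rainbow interval
around a pivot leaves out three tips, but its complement fits in the closure of one element of the
crown (`not_rainbow_of_pivot`). Finally, two crowns with the same pivot are gaps whose elements
contain one another, hence they coincide (`crown_unique`).
-/

open Set Filter Topology

namespace Veering

/-- The circle `S¹`: the unit additive circle `ℝ / ℤ`, with its standard
circular order (`sbtw x y z` means the triple `(x,y,z)` is counterclockwise)
and its standard topology. -/
abbrev S1 : Type := UnitAddCircle

/-- A good open interval in `S¹`, recorded by its ordered pair of distinct
endpoints; its carrier is the set of points strictly counterclockwise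
between them. -/
structure GoodInt : Type where
  a : S1
  b : S1
  ne : a ≠ b

namespace GoodInt

/-- The set of points of the good open interval `(a, b)`. -/
def carrier (I : GoodInt) : Set S1 := {z : S1 | sbtw I.a z I.b}

/-- The dual good interval `(u,v)* = (v,u)`. -/
def dual (I : GoodInt) : GoodInt := ⟨I.b, I.a, I.ne.symm⟩

/-- The vertex set `v(ℓ(I)) = {a, b}` of the leaf determined by `I`. -/
def verts (I : GoodInt) : Set S1 := {I.a, I.b}

end GoodInt

/-- `I` and `J` represent the same leaf `ℓ(I) = {I, I*}`. -/
def SameLeaf (I J : GoodInt) : Prop := J = I ∨ J = I.dual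

/-- A lamination system: a nonempty collection of good open intervals, closed
under duals, pairwise unlinked, and closed under unions of ascending chains
(when these unions are good intervals). -/
structure LamSys : Type where
  mem : Set GoodInt
  nonempty : mem.Nonempty
  dual_mem : ∀ I ∈ mem, GoodInt.dual I ∈ mem
  unlinked : ∀ I ∈ mem, ∀ J ∈ mem,
      I.carrier ⊆ J.carrier ∨ I.dual.carrier ⊆ J.carrier ∨
      I.carrier ⊆ J.dual.carrier ∨ I.dual.carrier ⊆ J.dual.carrier
  chain_closed : ∀ c : ℕ → GoodInt, (∀ n, c n ∈ mem) →
      (∀ n, (c n).carrier ⊆ (c (n + 1)).carrier) →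
      ∀ J : GoodInt, J.carrier = ⋃ n, (c n).carrier → J ∈ mem

namespace LamSys

/-- The endpoint set `E(𝓛)`: the union of the vertex sets of all leaves. -/
def E (L : LamSys) : Set S1 := ⋃ I ∈ L.mem, I.verts

/-- A gap of `L`: a set of pairwise disjoint elements of `L` such that every
leaf of `L` lies on one of them. -/
def IsGap (L : LamSys) (G : Set GoodInt) : Prop :=
  G ⊆ L.mem ∧
  (∀ I ∈ G, ∀ J ∈ G, I ≠ J → Disjoint I.carrier J.carrier) ∧
  (∀ I ∈ L.mem, ∃ J ∈ G, I.carrier ⊆ J.carrier ∨ I.dual.carrier ⊆ J.carrier)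

end LamSys

/-- The vertex set `v(𝒢) = S¹ \ ⋃ 𝒢` of a gap. -/
def gapVerts (G : Set GoodInt) : Set S1 := (⋃ I ∈ G, I.carrier)ᶜ

/-- `t` is a tip of `G`: an isolated point of the vertex set of `G`. -/
def IsTipOf (t : S1) (G : Set GoodInt) : Prop :=
  t ∈ gapVerts G ∧ t ∉ closure (gapVerts G \ {t})

/-- A gap that is itself a leaf `{I, I*}`. -/
def IsLeafGap (G : Set GoodInt) : Prop := ∃ I : GoodInt, G = {I, I.dual}

/-- `G` is a crown with tip sequence `t : ℤ → S¹` and pivot `p`. -/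
def IsCrownWith (G : Set GoodInt) (t : ℤ → S1) (p : S1) : Prop :=
  (∀ k, p ≠ t k) ∧ (∀ k, t k ≠ t (k + 1)) ∧
  G = {I : GoodInt | ∃ k : ℤ, I.a = t k ∧ I.b = t (k + 1)} ∧
  gapVerts G = Set.range t ∪ {p}

/-- `G` is a crown. -/
def IsCrown (G : Set GoodInt) : Prop := ∃ t p, IsCrownWith G t p

/-- `p` is the pivot of the crown `G`. -/
def IsPivotOf (p : S1) (G : Set GoodInt) : Prop := ∃ t, IsCrownWith G t p

/-- A lamination system is quite full if every gap is an ideal polygon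
(finitely many vertices) or a crown. -/
def LamSys.QuiteFull (L : LamSys) : Prop :=
  ∀ G : Set GoodInt, L.IsGap G → (gapVerts G).Finite ∨ IsCrown G

/-- `p` is a rainbow point of `L`: there is a strictly descending sequence of
elements of `L` whose intersection is `{p}`. -/
def LamSys.IsRainbowPt (L : LamSys) (p : S1) : Prop :=
  ∃ I : ℕ → GoodInt, (∀ n, I n ∈ L.mem) ∧
    (∀ n, (I (n + 1)).carrier ⊂ (I n).carrier) ∧ (⋂ n, (I n).carrier) = {p}

/-- `L` is loose: distinct non-leaf gaps have disjoint vertex sets. -/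
def LamSys.Loose (L : LamSys) : Prop :=
  ∀ G H : Set GoodInt, L.IsGap G → L.IsGap H → ¬ IsLeafGap G → ¬ IsLeafGap H →
    G ≠ H → Disjoint (gapVerts G) (gapVerts H)

/-- The sequence of leaves represented by `c` converges to the good
interval `J`. -/
def SeqConv (c : ℕ → GoodInt) (J : GoodInt) : Prop :=
  ∃ d : ℕ → GoodInt, (∀ n, SameLeaf (c n) (d n)) ∧
    J.carrier ⊆ Filter.liminf (fun n => (d n).carrier) Filter.atTop ∧
    Filter.limsup (fun n => (d n).carrier) Filter.atTop ⊆ closure J.carrier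

/-- `I ∈ L` admits an `I`-side sequence: a sequence of leaves of `L`, each
distinct from `ℓ(I)` and lying on `I`, converging to `I`.  (`I` is isolated
precisely when this fails.) -/
def LamSys.HasSideSeq (L : LamSys) (I : GoodInt) : Prop :=
  ∃ c : ℕ → GoodInt, (∀ n, c n ∈ L.mem) ∧ (∀ n, ¬ SameLeaf I (c n)) ∧
    (∀ n, (c n).carrier ⊆ I.carrier ∨ (c n).dual.carrier ⊆ I.carrier) ∧
    SeqConv c I

/-- `L` is totally disconnected: every distinct pair is separated by a
non-leaf gap. -/
def LamSys.TotDisc (L : LamSys) : Prop :=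
  ∀ I ∈ L.mem, ∀ J ∈ L.mem, I.carrier ⊂ J.dual.carrier →
    ∃ G : Set GoodInt, L.IsGap G ∧ ¬ IsLeafGap G ∧
      ∃ M ∈ G, ∃ N ∈ G, I.carrier ⊆ M.carrier ∧ J.carrier ⊆ N.carrier

/-- Gaps `G1` and `G2` interleave: every element of each contains exactly one
vertex of the other. -/
def Interleave (G1 G2 : Set GoodInt) : Prop :=
  (∀ I ∈ G1, ∃! x : S1, x ∈ I.carrier ∩ gapVerts G2) ∧
  (∀ I ∈ G2, ∃! x : S1, x ∈ I.carrier ∩ gapVerts G1)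

/-- A pseudo-fibered pair: two quite full, loose, strongly transverse
lamination systems. -/
structure PseudoFibered (L1 L2 : LamSys) : Prop where
  qf1 : L1.QuiteFull
  qf2 : L2.QuiteFull
  loose1 : L1.Loose
  loose2 : L2.Loose
  transverse : L1.E ∩ L2.E = ∅

/-- A veering pair: a pseudo-fibered pair in which every non-leaf gap of one
system admits an interleaving gap in the other. -/
structure VeeringPair (L1 L2 : LamSys) extends PseudoFibered L1 L2 : Prop where
  inter1 : ∀ G : Set GoodInt, L1.IsGap G → ¬ IsLeafGap G →
    ∃ H : Set GoodInt, L2.IsGap H ∧ Interleave G H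
  inter2 : ∀ G : Set GoodInt, L2.IsGap G → ¬ IsLeafGap G →
    ∃ H : Set GoodInt, L1.IsGap H ∧ Interleave G H

/-- An orientation-preserving homeomorphism of the circle: a bijection of
`S¹` which together with its inverse is continuous, and which preserves the
counterclockwise circular order. -/
def PosHomeo (g : Equiv.Perm S1) : Prop :=
  Continuous ⇑g ∧ Continuous ⇑g.symm ∧
  ∀ x y z : S1, sbtw x y z → sbtw (g x) (g y) (g z)

/-- `g ∈ Aut(𝓛)`: an orientation-preserving homeomorphism of `S¹` mapping each
element of `𝓛` to an element of `𝓛`. -/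
def LamSys.InAut (L : LamSys) (g : Equiv.Perm S1) : Prop :=
  PosHomeo g ∧ ∀ I ∈ L.mem, ∃ J ∈ L.mem, J.carrier = ⇑g '' I.carrier

/-- `g` maps the gap `G` onto itself. -/
def MapsGapOnto (g : Equiv.Perm S1) (G : Set GoodInt) : Prop :=
  (∀ I ∈ G, ∃ J ∈ G, J.carrier = ⇑g '' I.carrier) ∧
  (∀ J ∈ G, ∃ I ∈ G, J.carrier = ⇑g '' I.carrier)

/-- The fixed point set of `g` on `S¹`. -/
def FixSet (g : Equiv.Perm S1) : Set S1 := {x : S1 | g x = x}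

/-- The set of periodic points of `g` on `S¹`. -/
def PerSet (g : Equiv.Perm S1) : Set S1 := {x : S1 | ∃ n : ℕ, 0 < n ∧ (g ^ n) x = x}

/-- `p` is an attracting fixed point of `g`. -/
def IsAttractingFix (g : Equiv.Perm S1) (p : S1) : Prop :=
  g p = p ∧ ∃ I : GoodInt, I.carrier ∩ FixSet g = {p} ∧
    ⇑g '' closure I.carrier ⊆ I.carrier

/-- `p` is a repelling fixed point of `g`. -/
def IsRepellingFix (g : Equiv.Perm S1) (p : S1) : Prop :=
  g p = p ∧ ∃ I : GoodInt, I.carrier ∩ FixSet g = {p} ∧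
    I.carrier ⊆ ⇑g '' closure I.carrier

/-- `g` is elliptic: nontrivial of finite order. -/
def Elliptic (g : Equiv.Perm S1) : Prop := g ≠ 1 ∧ IsOfFinOrder g

/-- `g` is parabolic: it has exactly one fixed point. -/
def Parabolic (g : Equiv.Perm S1) : Prop := ∃! x : S1, g x = x

/-- `g` is hyperbolic: exactly two fixed points, one attracting and one
repelling. -/
def Hyperbolic (g : Equiv.Perm S1) : Prop :=
  ∃ a b : S1, a ≠ b ∧ FixSet g = {a, b} ∧ IsAttractingFix g a ∧ IsRepellingFix g b

/-- `g` is pseudo-Anosov-like for the pair `(L1, L2)`: nontrivial, neither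
elliptic nor parabolic, and preserving both gaps of some interleaving pair. -/
def PAlike (L1 L2 : LamSys) (g : Equiv.Perm S1) : Prop :=
  g ≠ 1 ∧ ¬ Elliptic g ∧ ¬ Parabolic g ∧
  ∃ G1 G2 : Set GoodInt, L1.IsGap G1 ∧ L2.IsGap G2 ∧ Interleave G1 G2 ∧
    MapsGapOnto g G1 ∧ MapsGapOnto g G2

/-- `g` is properly pseudo-Anosov: pA-like with nonempty fixed point set. -/
def ProperlyPA (L1 L2 : LamSys) (g : Equiv.Perm S1) : Prop :=
  PAlike L1 L2 g ∧ (FixSet g).Nonempty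

/-- Two leaves are linked: each of the two complementary components of the
vertex set of one contains a vertex of the other. -/
def LeavesLinked (I J : GoodInt) : Prop :=
  (I.carrier ∩ J.verts).Nonempty ∧ (I.dual.carrier ∩ J.verts).Nonempty

/-- Two gaps are linked: they contain a linked pair of boundary leaves. -/
def GapsLinked (G1 G2 : Set GoodInt) : Prop :=
  ∃ I1 ∈ G1, ∃ I2 ∈ G2, LeavesLinked I1 I2

/-- Gaps `G1`, `G2` cross: there are distinct pairs `{I₁, J₁} ⊆ G1`,
`{I₂, J₂} ⊆ G2` such that for each `i`, the vertex set of the other gap is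
contained in `Iᵢ ∪ Jᵢ` and meets `Iᵢ` in exactly one point. -/
def GapsCross (G1 G2 : Set GoodInt) : Prop :=
  ∃ I1 ∈ G1, ∃ J1 ∈ G1, ∃ I2 ∈ G2, ∃ J2 ∈ G2,
    I1.carrier ⊂ J1.dual.carrier ∧ I2.carrier ⊂ J2.dual.carrier ∧
    gapVerts G2 ⊆ I1.carrier ∪ J1.carrier ∧
    (∃! x : S1, x ∈ I1.carrier ∩ gapVerts G2) ∧
    gapVerts G1 ⊆ I2.carrier ∪ J2.carrier ∧
    (∃! x : S1, x ∈ I2.carrier ∩ gapVerts G1)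

/-- The Baumslag–Solitar group `BS(m,n) = ⟨a, b | b aᵐ b⁻¹ = aⁿ⟩`,
with `a = FreeGroup.of false` and `b = FreeGroup.of true`. -/
abbrev BSGroup (m n : ℤ) : Type :=
  PresentedGroup
    ({FreeGroup.of true * FreeGroup.of false ^ m * (FreeGroup.of true)⁻¹ *
        (FreeGroup.of false ^ n)⁻¹} : Set (FreeGroup Bool))

/-! ### Real coordinates on the circle -/

/-- The coordinate of `x` in the fundamental domain `[r, r + 1)`. Cutting the circle at the class
of `r` turns the circular order into the order of `ℝ`. -/
noncomputable def crd (r : ℝ) (x : S1) : ℝ := (AddCircle.equivIco 1 r x : ℝ)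

lemma crd_ge (r : ℝ) (x : S1) : r ≤ crd r x := (AddCircle.equivIco 1 r x).2.1

lemma crd_lt (r : ℝ) (x : S1) : crd r x < r + 1 := (AddCircle.equivIco 1 r x).2.2

lemma coe_crd (r : ℝ) (x : S1) : ((crd r x : ℝ) : S1) = x := AddCircle.coe_equivIco

lemma crd_coe {r w : ℝ} (h₁ : r ≤ w) (h₂ : w < r + 1) : crd r (w : S1) = w :=
  AddCircle.equivIco_coe_of_mem ⟨h₁, h₂⟩

lemma crd_base (r : ℝ) : crd r (r : S1) = r := crd_coe le_rfl (by linarith)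

lemma crd_inj {r : ℝ} {x y : S1} (h : crd r x = crd r y) : x = y := by
  rw [← coe_crd r x, ← coe_crd r y, h]

lemma crd_ne {r : ℝ} {x y : S1} (h : x ≠ y) : crd r x ≠ crd r y := fun h' => h (crd_inj h')

lemma toIco_cases {x y : ℝ} (h₁ : x - 1 < y) (h₂ : y < x + 1) :
    toIcoMod (one_pos : (0 : ℝ) < 1) x y = if x ≤ y then y else y + 1 := by
  split_ifs with h
  · exact (toIcoMod_eq_self _).2 ⟨h, h₂⟩
  · rw [← toIcoMod_add_right]
    exact (toIcoMod_eq_self _).2 ⟨by linarith, by linarith⟩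

lemma toIoc_cases {x y : ℝ} (h₁ : x - 1 < y) (h₂ : y < x + 1) :
    toIocMod (one_pos : (0 : ℝ) < 1) x y = if x < y then y else y + 1 := by
  split_ifs with h
  · exact (toIocMod_eq_self _).2 ⟨h, h₂.le⟩
  · rw [← toIocMod_add_right]
    exact (toIocMod_eq_self _).2 ⟨by linarith, by linarith⟩

lemma sbtw_crd (r : ℝ) (a z b : S1) : sbtw a z b ↔
    (crd r a < crd r z ∧ crd r z < crd r b) ∨ (crd r z < crd r b ∧ crd r b < crd r a) ∨
      (crd r b < crd r a ∧ crd r a < crd r z) := by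
  have ha := crd_ge r a
  have ha' := crd_lt r a
  have hb := crd_ge r b
  have hb' := crd_lt r b
  have hz := crd_ge r z
  have hz' := crd_lt r z
  rw [sbtw_iff_not_btw]
  have key : btw b z a ↔ toIcoMod (one_pos : (0 : ℝ) < 1) (crd r b) (crd r z) ≤
      toIocMod (one_pos : (0 : ℝ) < 1) (crd r b) (crd r a) := by
    conv_lhs => rw [← coe_crd r b, ← coe_crd r z, ← coe_crd r a]
    exact QuotientAddGroup.btw_coe_iff
  rw [key, toIco_cases (by linarith) (by linarith), toIoc_cases (by linarith) (by linarith)]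
  grind

lemma mem_carrier (r : ℝ) (I : GoodInt) (z : S1) : z ∈ I.carrier ↔
    (crd r I.a < crd r z ∧ crd r z < crd r I.b) ∨
    (crd r z < crd r I.b ∧ crd r I.b < crd r I.a) ∨
    (crd r I.b < crd r I.a ∧ crd r I.a < crd r z) := sbtw_crd r _ _ _

lemma coe_mem_carrier {r w : ℝ} (h₁ : r ≤ w) (h₂ : w < r + 1) (I : GoodInt) :
    (w : S1) ∈ I.carrier ↔
    (crd r I.a < w ∧ w < crd r I.b) ∨ (w < crd r I.b ∧ crd r I.b < crd r I.a) ∨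
    (crd r I.b < crd r I.a ∧ crd r I.a < w) := by
  rw [mem_carrier r, crd_coe h₁ h₂]

lemma mem_dual (r : ℝ) (I : GoodInt) (z : S1) : z ∈ I.dual.carrier ↔
    (crd r I.b < crd r z ∧ crd r z < crd r I.a) ∨
    (crd r z < crd r I.a ∧ crd r I.a < crd r I.b) ∨
    (crd r I.a < crd r I.b ∧ crd r I.b < crd r z) := sbtw_crd r _ _ _

lemma coe_mem_dual {r w : ℝ} (h₁ : r ≤ w) (h₂ : w < r + 1) (I : GoodInt) :
    (w : S1) ∈ I.dual.carrier ↔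
    (crd r I.b < w ∧ w < crd r I.a) ∨ (w < crd r I.a ∧ crd r I.a < crd r I.b) ∨
    (crd r I.a < crd r I.b ∧ crd r I.b < w) := by
  rw [mem_dual r, crd_coe h₁ h₂]

lemma GoodInt.ext' {I J : GoodInt} (ha : I.a = J.a) (hb : I.b = J.b) : I = J := by
  cases I; cases J; simp_all

/-! ### Intervals avoiding the base point -/

/-- The closure of `I` avoids the class of `r`; in the coordinate `crd r` such an `I` is an
ordinary open interval with endpoints in `(r, r + 1)`. -/
def Away (r : ℝ) (I : GoodInt) : Prop := r < crd r I.a ∧ crd r I.a < crd r I.b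

lemma away_of {r : ℝ} {I : GoodInt} (h : (r : S1) ∉ I.carrier) (ha : (r : S1) ≠ I.a)
    (hb : (r : S1) ≠ I.b) : Away r I := by
  have h1 := crd_ne (r := r) ha
  have h2 := crd_ne (r := r) hb
  have h3 := crd_ge r I.a
  have h4 := crd_ge r I.b
  have h5 := crd_ne (r := r) I.ne
  rw [mem_carrier r] at h
  rw [crd_base] at h h1 h2
  unfold Away
  grind

lemma Away.mem {r : ℝ} {I : GoodInt} (h : Away r I) (z : S1) :
    z ∈ I.carrier ↔ crd r I.a < crd r z ∧ crd r z < crd r I.b := by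
  rw [mem_carrier r]
  obtain ⟨h1, h2⟩ := h
  grind

lemma Away.base_notMem {r : ℝ} {I : GoodInt} (h : Away r I) : (r : S1) ∉ I.carrier := by
  rw [h.mem, crd_base]
  obtain ⟨h1, h2⟩ := h
  grind

lemma Away.coe_mem {r : ℝ} {I : GoodInt} (h : Away r I) {w : ℝ} (h₁ : r ≤ w) (h₂ : w < r + 1) :
    (w : S1) ∈ I.carrier ↔ crd r I.a < w ∧ w < crd r I.b := by
  rw [h.mem, crd_coe h₁ h₂]

lemma Away.mem_dual {r : ℝ} {I : GoodInt} (h : Away r I) (z : S1) :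
    z ∈ I.dual.carrier ↔ crd r z < crd r I.a ∨ crd r I.b < crd r z := by
  rw [Veering.mem_dual r]
  obtain ⟨h1, h2⟩ := h
  grind

lemma Away.subset_iff {r : ℝ} {I J : GoodInt} (hI : Away r I) (hJ : Away r J) :
    I.carrier ⊆ J.carrier ↔ crd r J.a ≤ crd r I.a ∧ crd r I.b ≤ crd r J.b := by
  constructor
  · intro h
    rw [← Set.Ioo_subset_Ioo_iff hI.2]
    intro w hw
    have h1 : r ≤ w := by linarith [hw.1, hI.1]
    have h2 : w < r + 1 := by linarith [hw.2, crd_lt r I.b]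
    exact (hJ.coe_mem h1 h2).1 (h ((hI.coe_mem h1 h2).2 hw))
  · rintro ⟨h1, h2⟩ z hz
    rw [hI.mem] at hz
    rw [hJ.mem]
    grind

lemma Away.eq {r : ℝ} {I J : GoodInt} (hI : Away r I) (hJ : Away r J)
    (h : I.carrier ⊆ J.carrier) (h' : J.carrier ⊆ I.carrier) : I = J := by
  rw [hI.subset_iff hJ] at h
  rw [hJ.subset_iff hI] at h'
  exact GoodInt.ext' (crd_inj (le_antisymm h'.1 h.1)) (crd_inj (le_antisymm h.2 h'.2))

lemma Away.nonempty {r : ℝ} {I : GoodInt} (hI : Away r I) : I.carrier.Nonempty := by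
  have h1 := hI.1
  have h2 := hI.2
  have h3 := crd_lt r I.b
  exact ⟨(((crd r I.a + crd r I.b) / 2 : ℝ) : S1),
    (hI.coe_mem (by linarith) (by linarith)).2 ⟨by linarith, by linarith⟩⟩

/-- Duality reverses inclusion. The circle is cut at a point of `J` outside `I`, near which a
point of `I*` is found. -/
lemma subset_of_dual_subset {I J : GoodInt} (h : I.dual.carrier ⊆ J.dual.carrier) :
    J.carrier ⊆ I.carrier := by
  intro z hz
  by_contra hzI
  obtain ⟨r, rfl⟩ := QuotientAddGroup.mk_surjective z
  change (r : S1) ∈ J.carrier at hz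
  change ¬ (r : S1) ∈ I.carrier at hzI
  rw [coe_mem_carrier le_rfl (by linarith)] at hz hzI
  have a1 := crd_ge r I.a
  have a2 := crd_ge r I.b
  have a3 := crd_ge r J.a
  have a4 := crd_ge r J.b
  have b1 := crd_lt r I.a
  have b2 := crd_lt r I.b
  have b3 := crd_lt r J.a
  have b4 := crd_lt r J.b
  have ne := crd_ne (r := r) I.ne
  have key : ∀ w : ℝ, r ≤ w → w < r + 1 → _ → _ := fun w h1 h2 hw =>
    (coe_mem_dual h1 h2 J).1 (h ((coe_mem_dual h1 h2 I).2 hw))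
  have hJ : crd r J.b < crd r J.a := by grind
  by_cases hb : crd r I.b = r
  · -- here `I* = (r, a)`
    have hlt : r < min (crd r I.a) (crd r J.b) := by
      rw [lt_min_iff]
      grind
    obtain ⟨w, hw1, hw2⟩ := exists_between hlt
    rw [lt_min_iff] at hw2
    have := key w (by grind) (by grind) (by grind)
    grind
  · obtain ⟨w, hw1, hw2⟩ := exists_between (max_lt b2 b3)
    rw [max_lt_iff] at hw1
    have := key w (by grind) (by grind) (by grind)
    grind

lemma dual_subset_iff {I J : GoodInt} : I.dual.carrier ⊆ J.dual.carrier ↔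
    J.carrier ⊆ I.carrier :=
  ⟨subset_of_dual_subset, fun h => subset_of_dual_subset (I := J.dual) (J := I.dual) h⟩

lemma dual_ssubset {I J : GoodInt} (h : J.carrier ⊂ I.carrier) :
    I.dual.carrier ⊂ J.dual.carrier :=
  ⟨dual_subset_iff.2 h.1, fun h' => h.2 (dual_subset_iff.1 h')⟩

lemma disjoint_dual (I : GoodInt) : Disjoint I.carrier I.dual.carrier := by
  rw [Set.disjoint_left]
  intro z hz hz'
  rw [mem_carrier 0] at hz
  rw [mem_dual 0] at hz'
  grind

lemma mem_cases (I : GoodInt) (z : S1) :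
    z ∈ I.carrier ∨ z ∈ I.dual.carrier ∨ z = I.a ∨ z = I.b := by
  by_contra! h
  obtain ⟨h1, h2, h3, h4⟩ := h
  rw [mem_carrier 0] at h1
  rw [mem_dual 0] at h2
  have := crd_ne (r := 0) h3
  have := crd_ne (r := 0) h4
  have := crd_ne (r := 0) I.ne
  grind

/-! ### The three alternatives exclude one another -/

lemma mem_E {L : LamSys} {p : S1} : p ∈ L.E ↔ ∃ I ∈ L.mem, p = I.a ∨ p = I.b := by
  simp [LamSys.E, GoodInt.verts]

lemma mem_gapVerts {G : Set GoodInt} {p : S1} : p ∈ gapVerts G ↔ ∀ I ∈ G, p ∉ I.carrier := by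
  simp [gapVerts]

lemma IsCrownWith.mem_gap {G : Set GoodInt} {t : ℤ → S1} {p : S1} (h : IsCrownWith G t p)
    (k : ℤ) : (⟨t k, t (k + 1), h.2.1 k⟩ : GoodInt) ∈ G :=
  (Set.ext_iff.1 h.2.2.1 _).2 ⟨k, rfl, rfl⟩

lemma IsCrownWith.away {G : Set GoodInt} {t : ℤ → S1} {r : ℝ} (h : IsCrownWith G t (r : S1))
    {I : GoodInt} (hI : I ∈ G) : Away r I := by
  have hp : (r : S1) ∈ gapVerts G := by rw [h.2.2.2]; right; rfl
  have h1 := mem_gapVerts.1 hp I hI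
  rw [h.2.2.1] at hI
  obtain ⟨k, ha, hb⟩ := hI
  exact away_of h1 (ha ▸ h.1 k) (hb ▸ h.1 (k + 1))

lemma IsCrownWith.tip_notMem {G : Set GoodInt} {t : ℤ → S1} {p : S1} (h : IsCrownWith G t p)
    {I : GoodInt} (hI : I ∈ G) (k : ℤ) : t k ∉ I.carrier := by
  have : t k ∈ gapVerts G := by rw [h.2.2.2]; left; exact ⟨k, rfl⟩
  exact mem_gapVerts.1 this I hI

/-- The tips `t 0` and `t 2` differ: otherwise the crown would contain both sides of a
leaf, leaving no room for the pivot. -/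
lemma IsCrownWith.tip_ne {G : Set GoodInt} {t : ℤ → S1} {p : S1} (h : IsCrownWith G t p) :
    t 0 ≠ t 2 := by
  intro h02
  have hp : p ∈ gapVerts G := by rw [h.2.2.2]; right; rfl
  have h0 := mem_gapVerts.1 hp _ (h.mem_gap 0)
  have h1 := mem_gapVerts.1 hp _ (h.mem_gap 1)
  have hd : (⟨t 1, t (1 + 1), h.2.1 1⟩ : GoodInt) =
      (⟨t 0, t (0 + 1), h.2.1 0⟩ : GoodInt).dual :=
    GoodInt.ext' rfl h02.symm
  rw [hd] at h1
  rcases mem_cases ⟨t 0, t (0 + 1), h.2.1 0⟩ p with e | e | e | e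
  · exact h0 e
  · exact h1 e
  · exact h.1 _ e
  · exact h.1 _ e

/-- An interval contained in one avoiding the base point with its closure avoids it likewise. -/
lemma Away.of_subset {r : ℝ} {I J : GoodInt} (hJ : Away r J) (h : I.carrier ⊆ J.carrier) :
    Away r I := by
  have hr : (r : S1) ∉ I.carrier := fun hr => hJ.base_notMem (h hr)
  have key : ∀ w : ℝ, r ≤ w → w < r + 1 → _ → _ := fun w h1 h2 hw =>
    (hJ.coe_mem h1 h2).1 (h ((coe_mem_carrier h1 h2 I).2 hw))
  have a1 := crd_ge r I.a
  have a2 := crd_ge r I.b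
  have b1 := crd_lt r I.a
  have b2 := crd_lt r I.b
  have b4 := crd_lt r J.b
  have ne := crd_ne (r := r) I.ne
  obtain ⟨hJ1, hJ2⟩ := hJ
  refine away_of hr ?_ ?_
  · intro h'
    have ha : crd r I.a = r := by rw [← h', crd_base]
    obtain ⟨w, hw1, hw2⟩ := exists_between (show r < min (crd r I.b) (crd r J.a) by grind)
    have := key w (by grind) (by grind) (by grind)
    grind
  · intro h'
    have hb : crd r I.b = r := by rw [← h', crd_base]
    obtain ⟨w, hw1, hw2⟩ := exists_between (max_lt b1 b4)
    have := key w (by grind) (by grind) (by grind)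
    grind

lemma Away.ne_verts {r : ℝ} {I : GoodInt} (h : Away r I) : (r : S1) ≠ I.a ∧ (r : S1) ≠ I.b := by
  obtain ⟨h1, h2⟩ := h
  have h3 := crd_base r
  constructor <;> intro h' <;> rw [h'] at h3 <;> linarith

lemma not_mem_E_of_pivot {L : LamSys} {G : Set GoodInt} (hG : L.IsGap G) {p : S1}
    (hp : IsPivotOf p G) : p ∉ L.E := by
  obtain ⟨t, h⟩ := hp
  obtain ⟨r, rfl⟩ := QuotientAddGroup.mk_surjective p
  change IsCrownWith G t (r : S1) at h
  intro hE
  obtain ⟨I, hI, hv⟩ := mem_E.1 hE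
  obtain ⟨J, hJ, hIJ⟩ := hG.2.2 I hI
  rcases hIJ with hIJ | hIJ
  · have := ((h.away hJ).of_subset hIJ).ne_verts
    tauto
  · have := ((h.away hJ).of_subset hIJ).ne_verts
    exact hv.elim this.2 this.1

lemma rainbow_eventually {I : ℕ → GoodInt} {p : S1}
    (hd : ∀ n, (I (n + 1)).carrier ⊂ (I n).carrier) (hI : (⋂ n, (I n).carrier) = {p})
    {x : S1} (hx : x ≠ p) : ∃ N, ∀ n ≥ N, x ∉ (I n).carrier := by
  have : x ∉ ⋂ n, (I n).carrier := by rw [hI]; exact hx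
  rw [Set.mem_iInter, not_forall] at this
  obtain ⟨N, hN⟩ := this
  have hanti : Antitone fun n => (I n).carrier := antitone_nat_of_succ_le fun n => (hd n).1
  exact ⟨N, fun n hn h => hN (hanti hn h)⟩

lemma rainbow_mem {I : ℕ → GoodInt} {p : S1} (hI : (⋂ n, (I n).carrier) = {p}) (n : ℕ) :
    p ∈ (I n).carrier := by
  have : p ∈ ⋂ n, (I n).carrier := by rw [hI]; rfl
  exact Set.mem_iInter.1 this n

lemma not_rainbow_of_vertex {L : LamSys} {I : GoodInt} (hI : I ∈ L.mem) : ¬ L.IsRainbowPt I.a := by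
  rintro ⟨R, hR, hd, hp⟩
  obtain ⟨r, hr⟩ := QuotientAddGroup.mk_surjective I.a
  change (r : S1) = I.a at hr
  have ha : crd r I.a = r := by rw [← hr, crd_base]
  have hb : r < crd r I.b := by
    have := crd_ne (r := r) I.ne
    rw [ha] at this
    exact lt_of_le_of_ne (crd_ge _ _) this
  have hb' := crd_lt r I.b
  -- the points `x` and `y` separate both endpoints of the leaf from one another
  obtain ⟨x, hx1, hx2⟩ := exists_between hb
  obtain ⟨y, hy1, hy2⟩ := exists_between hb'
  have hne : ∀ w : ℝ, r < w → w < r + 1 → (w : S1) ≠ I.a := by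
    intro w h1 h2 h
    have := crd_coe h1.le h2
    rw [h, ha] at this
    linarith
  obtain ⟨N, hN⟩ := rainbow_eventually hd hp (hne x hx1 (by linarith))
  obtain ⟨M, hM⟩ := rainbow_eventually hd hp (hne y (by linarith) hy2)
  obtain ⟨J, hJL, hxJ, hyJ, hrJ⟩ : ∃ J ∈ L.mem, (x : S1) ∉ J.carrier ∧ (y : S1) ∉ J.carrier ∧
      (r : S1) ∈ J.carrier :=
    ⟨R (max N M), hR _, hN _ (le_max_left _ _), hM _ (le_max_right _ _), hr ▸ rainbow_mem hp _⟩
  clear hN hM hne hd hp hR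
  rw [coe_mem_carrier (r := r) (by linarith) (by linarith)] at hxJ hyJ hrJ
  have a1 := crd_ge r J.a
  have a2 := crd_ge r J.b
  have b1 := crd_lt r J.a
  have b2 := crd_lt r J.b
  have hJ1 : r < crd r J.b := by grind
  have hJ2 : crd r J.b ≤ x := by grind
  have hJ3 : y ≤ crd r J.a := by grind
  clear hxJ hyJ hrJ
  rcases L.unlinked I hI J hJL with h | h | h | h
  · obtain ⟨w, h1, h2⟩ := exists_between hx2
    have := (coe_mem_carrier (r := r) (by linarith) (by linarith) J).1
      (h ((coe_mem_carrier (r := r) (w := w) (by linarith) (by linarith) I).2 (by grind)))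
    grind
  · obtain ⟨w, h1, h2⟩ := exists_between hy1
    have := (coe_mem_carrier (r := r) (by linarith) (by linarith) J).1
      (h ((coe_mem_dual (r := r) (w := w) (by linarith) (by linarith) I).2 (by grind)))
    grind
  · obtain ⟨w, h1, h2⟩ := exists_between hJ1
    have := (coe_mem_dual (r := r) (by linarith) (by linarith) J).1
      (h ((coe_mem_carrier (r := r) (w := w) (by linarith) (by linarith) I).2 (by grind)))
    grind
  · obtain ⟨w, h1, h2⟩ := exists_between b1
    have := (coe_mem_dual (r := r) (by linarith) (by linarith) J).1
      (h ((coe_mem_dual (r := r) (w := w) (by linarith) (by linarith) I).2 (by grind)))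
    grind

lemma not_rainbow_of_mem_E {L : LamSys} {p : S1} (hp : p ∈ L.E) : ¬ L.IsRainbowPt p := by
  obtain ⟨I, hI, rfl | rfl⟩ := mem_E.1 hp
  · exact not_rainbow_of_vertex hI
  · exact not_rainbow_of_vertex (I := I.dual) (L.dual_mem I hI)

/-- A rainbow interval missing three tips of a crown has its complement inside the closure of a
single element of the crown, which contains only two tips. -/
lemma not_rainbow_of_pivot {L : LamSys} {G : Set GoodInt} (hG : L.IsGap G) {p : S1}
    (hp : IsPivotOf p G) : ¬ L.IsRainbowPt p := by
  obtain ⟨t, h⟩ := hp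
  obtain ⟨r, rfl⟩ := QuotientAddGroup.mk_surjective p
  change IsCrownWith G t (r : S1) at h
  rintro ⟨R, hR, hd, hp⟩
  obtain ⟨N0, h0⟩ := rainbow_eventually hd hp (h.1 0).symm
  obtain ⟨N1, h1⟩ := rainbow_eventually hd hp (h.1 1).symm
  obtain ⟨N2, h2⟩ := rainbow_eventually hd hp (h.1 2).symm
  set N := max N0 (max N1 N2)
  specialize h0 N (by simp [N])
  specialize h1 N (by simp [N])
  specialize h2 N (by simp [N])
  have hrR : (r : S1) ∈ (R N).carrier := rainbow_mem hp N
  obtain ⟨J, hJ, hs⟩ := hG.2.2 (R N) (hR N)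
  have hA := h.away hJ
  rcases hs with hs | hs
  · exact hA.base_notMem (hs hrR)
  · have hB := hA.of_subset hs
    rw [hB.subset_iff hA] at hs
    have hcl : ∀ k : ℤ, t k ∉ (R N).carrier →
        crd r (t k) = crd r J.a ∨ crd r (t k) = crd r J.b := by
      intro k hk
      have ht := h.tip_notMem hJ k
      rw [hA.mem] at ht
      have : t k ∉ (R N).dual.dual.carrier := hk
      rw [hB.mem_dual] at this
      grind
    have e0 := hcl 0 h0
    have e1 := hcl 1 h1
    have e2 := hcl 2 h2
    have n1 := crd_ne (r := r) (h.2.1 0)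
    have n2 := crd_ne (r := r) (h.2.1 1)
    have n3 := crd_ne (r := r) h.tip_ne
    norm_num at n1 n2
    grind

/-! ### Uniqueness of the crown -/

lemma gap_subset_of_pivot {L : LamSys} {G H : Set GoodInt} (hG : L.IsGap G) (hH : L.IsGap H)
    {r : ℝ} {t s : ℤ → S1} (hGp : IsCrownWith G t (r : S1)) (hHp : IsCrownWith H s (r : S1)) :
    G ⊆ H := by
  -- for crowns with the same pivot, only the first alternative of `lies on` can occur
  have key : ∀ {G H : Set GoodInt} {t s : ℤ → S1}, L.IsGap G → L.IsGap H →
      IsCrownWith G t (r : S1) → IsCrownWith H s (r : S1) →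
      ∀ I ∈ G, ∃ J ∈ H, I.carrier ⊆ J.carrier := by
    intro G H t s hG hH hGp hHp I hI
    obtain ⟨J, hJ, h | h⟩ := hH.2.2 I (hG.1 hI)
    · exact ⟨J, hJ, h⟩
    · have h1 := hGp.away hI
      have h2 := (hHp.away hJ).of_subset h
      exact absurd h1.2 (lt_asymm h2.2)
  intro I hI
  obtain ⟨J, hJ, hIJ⟩ := key hG hH hGp hHp I hI
  obtain ⟨K, hK, hJK⟩ := key hH hG hHp hGp J hJ
  have hIK : I = K := by
    by_contra hne
    obtain ⟨z, hz⟩ := (hGp.away hI).nonempty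
    exact Set.disjoint_left.1 (hG.2.1 I hI K hK hne) hz (hJK (hIJ hz))
  subst hIK
  rwa [(hGp.away hI).eq (hHp.away hJ) hIJ hJK]

lemma crown_unique {L : LamSys} {G H : Set GoodInt} (hG : L.IsGap G) (hH : L.IsGap H) {p : S1}
    (hGp : IsPivotOf p G) (hHp : IsPivotOf p H) : G = H := by
  obtain ⟨r, rfl⟩ := QuotientAddGroup.mk_surjective p
  obtain ⟨t, ht⟩ := hGp
  obtain ⟨s, hs⟩ := hHp
  exact (gap_subset_of_pivot hG hH ht hs).antisymm (gap_subset_of_pivot hH hG hs ht)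

/-! ### Existence -/

/-- The sides of the leaves of `L` on which the class of `r` does not lie. When that class is not
an endpoint of `L`, exactly one side of each leaf is of this kind. -/
def awaySides (L : LamSys) (r : ℝ) : Set GoodInt := {I ∈ L.mem | Away r I}

lemma away_or_dual {L : LamSys} {r : ℝ} (hE : (r : S1) ∉ L.E) {I : GoodInt} (hI : I ∈ L.mem) :
    Away r I ∨ Away r I.dual := by
  have hv : (r : S1) ≠ I.a ∧ (r : S1) ≠ I.b := by
    rw [mem_E] at hE
    push Not at hE
    exact hE I hI
  by_cases h : (r : S1) ∈ I.carrier
  · exact .inr (away_of (Set.disjoint_left.1 (disjoint_dual I) h) hv.2 hv.1)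
  · exact .inl (away_of h hv.1 hv.2)

/-- The sides avoiding the base point form a laminar family. -/
lemma laminar {L : LamSys} {r : ℝ} {I J : GoodInt} (hI : I ∈ awaySides L r)
    (hJ : J ∈ awaySides L r) :
    I.carrier ⊆ J.carrier ∨ J.carrier ⊆ I.carrier ∨ Disjoint I.carrier J.carrier := by
  rcases L.unlinked I hI.1 J hJ.1 with h | h | h | h
  · exact .inl h
  · exact absurd (hJ.2.of_subset h).2 (lt_asymm hI.2.2)
  · exact .inr (.inr (Set.disjoint_of_subset_left h (disjoint_dual J).symm))
  · exact .inr (.inl (subset_of_dual_subset h))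

/-- The maximal sides avoiding the base point. -/
def maxSides (L : LamSys) (r : ℝ) : Set GoodInt :=
  {I ∈ awaySides L r | ∀ J ∈ awaySides L r, I.carrier ⊆ J.carrier → J.carrier ⊆ I.carrier}

lemma isGap_maxSides {L : LamSys} {r : ℝ} (hE : (r : S1) ∉ L.E)
    (h : ∀ I ∈ awaySides L r, ∃ J ∈ maxSides L r, I.carrier ⊆ J.carrier) :
    L.IsGap (maxSides L r) := by
  refine ⟨fun I hI => hI.1.1, ?_, ?_⟩
  · intro I hI J hJ hne
    rcases laminar hI.1 hJ.1 with h' | h' | h'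
    · exact absurd (hI.1.2.eq hJ.1.2 h' (hI.2 J hJ.1 h')) hne
    · exact absurd (hI.1.2.eq hJ.1.2 (hJ.2 I hI.1 h') h') hne
    · exact h'
  · intro I hI
    rcases away_or_dual hE hI with h' | h'
    · obtain ⟨J, hJ, hs⟩ := h I ⟨hI, h'⟩
      exact ⟨J, hJ, .inl hs⟩
    · obtain ⟨J, hJ, hs⟩ := h I.dual ⟨L.dual_mem I hI, h'⟩
      exact ⟨J, hJ, .inr hs⟩

/-- The initial endpoint of an element of the gap is a vertex: a second element around it would
overlap the first. -/
lemma left_mem_gapVerts {L : LamSys} {r : ℝ} (hG : L.IsGap (maxSides L r)) {I : GoodInt}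
    (hI : I ∈ maxSides L r) : I.a ∈ gapVerts (maxSides L r) := by
  rw [mem_gapVerts]
  intro J hJ hmem
  have hne : I ≠ J := by
    rintro rfl
    rw [hI.1.2.mem] at hmem
    exact lt_irrefl _ hmem.1
  rw [hJ.1.2.mem] at hmem
  have hI1 := hI.1.2.1
  have hI2 := hI.1.2.2
  have hlt := crd_lt r I.b
  obtain ⟨w, hw1, hw2⟩ := exists_between (lt_min hI2 hmem.2)
  rw [lt_min_iff] at hw2
  exact Set.disjoint_left.1 (hG.2.1 I hI J hJ hne)
    ((hI.1.2.coe_mem (by linarith) (by linarith)).2 ⟨hw1, hw2.1⟩)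
    ((hJ.1.2.coe_mem (by linarith) (by linarith)).2 ⟨by linarith [hmem.1], hw2.2⟩)

/-- The base point is an accumulation point of the vertices, because no element of the gap ends
there. -/
lemma gapVerts_infinite {L : LamSys} {r : ℝ} (hG : L.IsGap (maxSides L r)) :
    ¬ (gapVerts (maxSides L r)).Finite := by
  intro hfin
  -- a right neighbourhood `(r, s)` of the base point free of vertices
  have hF : ((crd r '' gapVerts (maxSides L r)) \ {r}).Finite := (hfin.image _).sdiff
  have hev : ∀ᶠ w in 𝓝 r, w ∉ (crd r '' gapVerts (maxSides L r)) \ {r} :=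
    hF.isClosed.isOpen_compl.mem_nhds (by simp)
  obtain ⟨ε, hε, hball⟩ := Metric.eventually_nhds_iff.1 hev
  have hpos : r < min (r + ε) (r + 1) := lt_min (by linarith) (by linarith)
  obtain ⟨w, hw1, hw2⟩ := exists_between hpos
  rw [lt_min_iff] at hw2
  have hfree : ∀ v, r < v → v ≤ w → (v : S1) ∉ gapVerts (maxSides L r) := by
    intro v h1 h2 hv
    refine hball (y := v) ?_ ⟨⟨_, hv, crd_coe h1.le (by linarith)⟩, h1.ne'⟩
    rw [Real.dist_eq, abs_of_pos (by linarith)]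
    linarith
  have hw := hfree w hw1 le_rfl
  rw [mem_gapVerts] at hw
  push Not at hw
  obtain ⟨I, hI, hwI⟩ := hw
  rw [hI.1.2.coe_mem hw1.le hw2.2] at hwI
  apply hfree _ hI.1.2.1 hwI.1.le
  rw [coe_crd]
  exact left_mem_gapVerts hG hI

lemma pivot_of_max {L : LamSys} (hqf : L.QuiteFull) {r : ℝ} (hE : (r : S1) ∉ L.E)
    (h : ∀ I ∈ awaySides L r, ∃ J ∈ maxSides L r, I.carrier ⊆ J.carrier) :
    ∃ G, L.IsGap G ∧ IsCrown G ∧ IsPivotOf (r : S1) G := by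
  have hG := isGap_maxSides hE h
  have hcr := (hqf _ hG).resolve_left (gapVerts_infinite hG)
  refine ⟨_, hG, hcr, ?_⟩
  obtain ⟨t, p, ht⟩ := hcr
  have hr : (r : S1) ∈ gapVerts (maxSides L r) :=
    mem_gapVerts.2 fun I hI => hI.1.2.base_notMem
  rw [ht.2.2.2] at hr
  rcases hr with ⟨k, hk⟩ | hr
  · exact absurd (mem_E.2 ⟨_, hG.1 (ht.mem_gap k), .inl hk.symm⟩) hE
  · rw [Set.mem_singleton_iff] at hr
    exact ⟨t, hr ▸ ht⟩

/-- An open interval of coordinates, other than `(r, r + 1)` itself, is a good interval. -/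
lemma exists_goodInt {r u v : ℝ} (hu : r ≤ u) (huv : u < v) (hv : v ≤ r + 1)
    (hne : r < u ∨ v < r + 1) :
    ∃ J : GoodInt, (∀ z, z ∈ J.carrier ↔ u < crd r z ∧ crd r z < v) ∧
      (Away r J ∨ (r : S1) = J.a ∨ (r : S1) = J.b) := by
  have hcu : crd r (u : S1) = u := crd_coe hu (by linarith)
  rcases hv.lt_or_eq with hv' | rfl
  · have hcv : crd r (v : S1) = v := crd_coe (by linarith) hv'
    refine ⟨⟨(u : S1), (v : S1), fun h => ?_⟩, fun z => ?_, ?_⟩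
    · rw [h, hcv] at hcu
      linarith
    · rw [mem_carrier r]
      simp only [hcu, hcv]
      grind
    · rcases hu.lt_or_eq with h | h
      · left
        simp only [Away, hcu, hcv]
        exact ⟨h, huv⟩
      · right; left
        simp only [h]
  · have hlt : r < u := by grind
    refine ⟨⟨(u : S1), (r : S1), fun h => ?_⟩, fun z => ?_, .inr (.inr rfl)⟩
    · rw [h, crd_base] at hcu
      linarith
    · rw [mem_carrier r]
      simp only [hcu, crd_base]
      have := crd_ge r z
      have := crd_lt r z
      grind

/-- An ascending sequence of sides avoiding a non-endpoint either exhausts the complement of that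
point, or has its union in `L`: the union is an interval of coordinates, and closedness applies
unless that interval is the whole of `(r, r + 1)`. -/
lemma chain_union {L : LamSys} {r : ℝ} (hE : (r : S1) ∉ L.E) {c : ℕ → GoodInt}
    (hc : ∀ n, c n ∈ awaySides L r) (hmono : ∀ n, (c n).carrier ⊆ (c (n + 1)).carrier) :
    (∃ J ∈ awaySides L r, J.carrier = ⋃ n, (c n).carrier) ∨
      ∀ z : S1, z ≠ (r : S1) → ∃ n, z ∈ (c n).carrier := by
  have hm : Monotone fun n => (c n).carrier := monotone_nat_of_le_succ hmono
  set A := fun n => crd r (c n).a with hA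
  set B := fun n => crd r (c n).b with hB
  have hAanti : Antitone A := fun m n h => (((hc m).2.subset_iff (hc n).2).1 (hm h)).1
  have hBmono : Monotone B := fun m n h => (((hc m).2.subset_iff (hc n).2).1 (hm h)).2
  have hAb : BddBelow (Set.range A) := ⟨r, by rintro _ ⟨n, rfl⟩; exact crd_ge _ _⟩
  have hBb : BddAbove (Set.range B) := ⟨r + 1, by rintro _ ⟨n, rfl⟩; exact (crd_lt _ _).le⟩
  set u := ⨅ n, A n with hu
  set v := ⨆ n, B n with hv
  have hur : r ≤ u := le_ciInf fun n => crd_ge _ _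
  have hvr : v ≤ r + 1 := ciSup_le fun n => (crd_lt _ _).le
  have huA : ∀ n, u ≤ A n := fun n => ciInf_le hAb n
  have hBv : ∀ n, B n ≤ v := fun n => le_ciSup hBb n
  have huv : u < v := lt_of_le_of_lt (huA 0) (lt_of_lt_of_le (hc 0).2.2 (hBv 0))
  have hU : ∀ z, (u < crd r z ∧ crd r z < v) ↔ ∃ n, z ∈ (c n).carrier := by
    intro z
    constructor
    · rintro ⟨h1, h2⟩
      obtain ⟨m, hm'⟩ := exists_lt_of_ciInf_lt h1
      obtain ⟨n, hn'⟩ := exists_lt_of_lt_ciSup h2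
      refine ⟨max m n, ((hc _).2.mem z).2 ⟨?_, ?_⟩⟩
      · exact lt_of_le_of_lt (hAanti (le_max_left m n)) hm'
      · exact lt_of_lt_of_le hn' (hBmono (le_max_right m n))
    · rintro ⟨n, hn⟩
      rw [(hc n).2.mem] at hn
      exact ⟨lt_of_le_of_lt (huA n) hn.1, lt_of_lt_of_le hn.2 (hBv n)⟩
  by_cases hne : r < u ∨ v < r + 1
  · left
    obtain ⟨J, hJ, hJ'⟩ := exists_goodInt hur huv hvr hne
    have hJU : J.carrier = ⋃ n, (c n).carrier := by
      ext z
      rw [hJ, hU, Set.mem_iUnion]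
    have hJL : J ∈ L.mem := L.chain_closed c (fun n => (hc n).1) hmono J hJU
    refine ⟨J, ⟨hJL, hJ'.resolve_right fun h => hE (mem_E.2 ⟨J, hJL, h⟩)⟩, hJU⟩
  · right
    intro z hz
    push Not at hne
    rw [← hU]
    have h1 := crd_ne (r := r) hz
    rw [crd_base] at h1
    have h2 := crd_ge r z
    have h3 := crd_lt r z
    grind

/-- The sides containing `I` that avoid the base point have a cofinal ascending sequence, by the
Lindelöf property of `ℝ`. -/
lemma exists_chain {L : LamSys} {r : ℝ} {I : GoodInt} (hI : I ∈ awaySides L r) :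
    ∃ c : ℕ → GoodInt, (∀ n, c n ∈ awaySides L r ∧ I.carrier ⊆ (c n).carrier) ∧
      (∀ n, (c n).carrier ⊆ (c (n + 1)).carrier) ∧
      ∀ J ∈ awaySides L r, I.carrier ⊆ J.carrier → J.carrier ⊆ ⋃ n, (c n).carrier := by
  classical
  let D : Set GoodInt := {J ∈ awaySides L r | I.carrier ⊆ J.carrier}
  let f : GoodInt → Set ℝ := fun J => Set.Ioo (crd r J.a) (crd r J.b)
  obtain ⟨T, hTD, hT, hTU⟩ := TopologicalSpace.isOpen_biUnion_countable D f
    fun J _ => isOpen_Ioo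
  have hID : I ∈ D := ⟨hI, subset_rfl⟩
  have hfmem : ∀ J ∈ D, ∀ z, z ∈ J.carrier ↔ crd r z ∈ f J := fun J hJ z => hJ.1.2.mem z
  have hTne : T.Nonempty := by
    obtain ⟨z, hz⟩ := hI.2.nonempty
    have : crd r z ∈ ⋃ J ∈ T, f J := by
      rw [hTU]
      exact Set.mem_biUnion hID ((hfmem I hID z).1 hz)
    simp only [Set.mem_iUnion] at this
    obtain ⟨J, hJ, -⟩ := this
    exact ⟨J, hJ⟩
  have : Countable T := hT.to_subtype
  let _ : Encodable T := Encodable.ofCountable T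
  let _ : Inhabited T := ⟨⟨_, hTne.some_mem⟩⟩
  have hdir : Directed (· ≤ ·) fun J : T => J.1.carrier := by
    intro J K
    have hJ := hTD J.2
    have hK := hTD K.2
    rcases laminar hJ.1 hK.1 with h | h | h
    · exact ⟨K, h, le_rfl⟩
    · exact ⟨J, le_rfl, h⟩
    · obtain ⟨z, hz⟩ := hI.2.nonempty
      exact absurd (hK.2 hz) (Set.disjoint_left.1 h (hJ.2 hz))
  refine ⟨fun n => (hdir.sequence _ n).1, fun n => hTD (hdir.sequence _ n).2,
    hdir.sequence_mono_nat, fun J hJ hIJ z hz => ?_⟩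
  have : crd r z ∈ ⋃ J ∈ T, f J := by
    rw [hTU]
    exact Set.mem_biUnion (show J ∈ D from ⟨hJ, hIJ⟩) ((hfmem J ⟨hJ, hIJ⟩ z).1 hz)
  simp only [Set.mem_iUnion] at this
  obtain ⟨K, hK, hzK⟩ := this
  exact Set.mem_iUnion.2 ⟨_, hdir.le_sequence ⟨K, hK⟩ ((hfmem K (hTD hK) z).2 hzK)⟩

/-- The duals of a strictly ascending subsequence of a chain exhausting the complement of the base
point form a rainbow there. -/
lemma rainbow_of_exhaust {L : LamSys} {r : ℝ} {c : ℕ → GoodInt}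
    (hc : ∀ n, c n ∈ awaySides L r) (hmono : ∀ n, (c n).carrier ⊆ (c (n + 1)).carrier)
    (hex : ∀ z : S1, z ≠ (r : S1) → ∃ n, z ∈ (c n).carrier) : L.IsRainbowPt (r : S1) := by
  have hm : Monotone fun n => (c n).carrier := monotone_nat_of_le_succ hmono
  -- no term of the chain is the whole complement, since its endpoints are not the base point
  have hstep : ∀ n, ∃ m, n < m ∧ (c n).carrier ⊂ (c m).carrier := by
    intro n
    obtain ⟨m, hm'⟩ := hex (c n).a (hc n).2.ne_verts.1.symm
    have hna : (c n).a ∉ (c n).carrier := by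
      rw [(hc n).2.mem]
      exact fun h => lt_irrefl _ h.1
    have hnm : n < m := by
      by_contra! h
      exact hna (hm h hm')
    exact ⟨m, hnm, hm hnm.le, fun h => hna (h hm')⟩
  choose g hg hg' using hstep
  let φ : ℕ → ℕ := fun k => g^[k] 0
  have hφs : ∀ k, φ (k + 1) = g (φ k) := fun k => Function.iterate_succ_apply' g k 0
  have hφ : StrictMono φ := strictMono_nat_of_lt_succ fun k => by rw [hφs]; exact hg _
  refine ⟨fun k => (c (φ k)).dual, fun k => L.dual_mem _ (hc _).1, fun k => ?_, ?_⟩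
  · apply dual_ssubset
    rw [hφs]
    exact hg' _
  · ext z
    rw [Set.mem_iInter, Set.mem_singleton_iff]
    constructor
    · intro h
      by_contra hz
      obtain ⟨n, hn⟩ := hex z hz
      exact Set.disjoint_left.1 (disjoint_dual _) (hm (hφ.id_le n) hn) (h n)
    · rintro rfl k
      rw [(hc _).2.mem_dual, crd_base]
      exact .inl (hc _).2.1

lemma rainbow_of_not_max {L : LamSys} {r : ℝ} (hE : (r : S1) ∉ L.E) {I : GoodInt}
    (hI : I ∈ awaySides L r) (h : ∀ J ∈ maxSides L r, ¬ I.carrier ⊆ J.carrier) :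
    L.IsRainbowPt (r : S1) := by
  obtain ⟨c, hc, hmono, hcof⟩ := exists_chain hI
  rcases chain_union hE (fun n => (hc n).1) hmono with ⟨J, hJ, hJU⟩ | hex
  · have hIJ : I.carrier ⊆ J.carrier := by
      rw [hJU]
      exact hcof I hI subset_rfl
    refine absurd hIJ (h J ⟨hJ, fun K hK hJK => ?_⟩)
    rw [hJU]
    exact hcof K hK (hIJ.trans hJK)
  · exact rainbow_of_exhaust (fun n => (hc n).1) hmono hex

lemma pivot_or_rainbow {L : LamSys} (hqf : L.QuiteFull) {p : S1} (hE : p ∉ L.E) :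
    (∃ G, L.IsGap G ∧ IsCrown G ∧ IsPivotOf p G) ∨ L.IsRainbowPt p := by
  obtain ⟨r, rfl⟩ := QuotientAddGroup.mk_surjective p
  by_cases h : ∀ I ∈ awaySides L r, ∃ J ∈ maxSides L r, I.carrier ⊆ J.carrier
  · exact .inl (pivot_of_max hqf hE h)
  · push Not at h
    obtain ⟨I, hI, h⟩ := h
    exact .inr (rainbow_of_not_max hE hI h)

/-- in a quite full lamination system, each point of the circle
is exactly one of: an endpoint, the pivot of a unique crown, or a rainbow
point. -/
theorem statement2 (L : LamSys) (hqf : L.QuiteFull) (p : S1) :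
    (p ∈ L.E ∧ ¬ (∃ G : Set GoodInt, L.IsGap G ∧ IsCrown G ∧ IsPivotOf p G) ∧
      ¬ L.IsRainbowPt p) ∨
    ((∃! G : Set GoodInt, L.IsGap G ∧ IsCrown G ∧ IsPivotOf p G) ∧
      p ∉ L.E ∧ ¬ L.IsRainbowPt p) ∨
    (L.IsRainbowPt p ∧ p ∉ L.E ∧
      ¬ (∃ G : Set GoodInt, L.IsGap G ∧ IsCrown G ∧ IsPivotOf p G)) := by
  by_cases hE : p ∈ L.E
  · exact .inl ⟨hE, fun ⟨G, hG, _, hp⟩ => not_mem_E_of_pivot hG hp hE, not_rainbow_of_mem_E hE⟩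
  by_cases hP : ∃ G : Set GoodInt, L.IsGap G ∧ IsCrown G ∧ IsPivotOf p G
  · obtain ⟨G, hG, hcr, hp⟩ := hP
    exact .inr (.inl ⟨⟨G, ⟨hG, hcr, hp⟩, fun H hH => crown_unique hH.1 hG hH.2.2 hp⟩, hE,
      not_rainbow_of_pivot hG hp⟩)
  · exact .inr (.inr ⟨(pivot_or_rainbow hqf hE).resolve_left hP, hE, hP⟩)

end Veering
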